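/- arXiv:1311.0577 — 5 statements merged into one kernel-verified Lean document; each statement's English description precedes it below -/
import Mathlib

section
/- The polynomial P = x^32 - 4x^31 - 155x^28 + 713x^27 - 2480x^26 + 9300x^25 - 5921x^24 + 24707x^23 + 127410x^22 - 646195x^21 + 747906x^20 - 7527575x^19 + 4369791x^18 - 28954961x^17 - 40645681x^16 + 66421685x^15 - 448568729x^14 + 751001257x^13 - 1820871490x^12 + 2531110165x^11 - 4120267319x^10 + 4554764528x^9 - 5462615927x^8 + 4607500922x^7 - 4062352344x^6 + 2380573824x^5 - 1492309000x^4 + 521018178x^3 - 201167463x^2 + 20505628x - 1261963 is irreducible over the rational numbers ℚ. -/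
open Polynomial

noncomputable def P : Polynomial ℚ :=
  X^32 - 4*X^31 - 155*X^28 + 713*X^27 - 2480*X^26 + 9300*X^25 - 5921*X^24 + 24707*X^23 + 127410*X^22 - 646195*X^21 + 747906*X^20 - 7527575*X^19 + 4369791*X^18 - 28954961*X^17 - 40645681*X^16 + 66421685*X^15 - 448568729*X^14 + 751001257*X^13 - 1820871490*X^12 + 2531110165*X^11 - 4120267319*X^10 + 4554764528*X^9 - 5462615927*X^8 + 4607500922*X^7 - 4062352344*X^6 + 2380573824*X^5 - 1492309000*X^4 + 521018178*X^3 - 201167463*X^2 + 20505628*X - 1261963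

/-!
Modulo 31 the polynomial is `(X - 4) ^ 32`, but Eisenstein's criterion at `X - 4` fails, because
`31 ^ 2` divides `P(4)`. However, `31 ^ 2` does not divide `P'(4)`. If `P = g * h` with `g` and `h`
monic of degree at least two, then both are divisible by `(X - 4) ^ 2` modulo 31, so `31` divides
each of `g(4)`, `g'(4)`, `h(4)`, `h'(4)`, and `31 ^ 2` divides `P'(4) = g'(4) h(4) + g(4) h'(4)`.
Hence in a proper factorization one factor is linear, which is impossible because `P` has no root
modulo 3.
-/

section Criterion

variable {R S : Type*} [CommRing R] [CommRing S] {φ : R →+* S} {a : R} {f g h : R[X]}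

lemma eq_X_sub_C_pow_natDegree_of_monic_of_dvd [IsDomain S] {p : S[X]} {b : S} {n : ℕ}
    (hp : p.Monic) (hdvd : p ∣ (X - C b) ^ n) : p = (X - C b) ^ p.natDegree := by
  obtain ⟨i, -, hi⟩ := (dvd_prime_pow (prime_X_sub_C b) n).1 hdvd
  obtain rfl : p = (X - C b) ^ i :=
    eq_of_monic_of_associated hp ((monic_X_sub_C b).pow i) hi
  rw [natDegree_pow, natDegree_X_sub_C, mul_one]

lemma eval_mem_ker_of_X_sub_C_dvd_map (hg : X - C (φ a) ∣ g.map φ) :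
    g.eval a ∈ RingHom.ker φ := by
  rwa [dvd_iff_isRoot, IsRoot, eval_map_apply] at hg

lemma eval_derivative_mem_ker_of_X_sub_C_sq_dvd_map (hg : (X - C (φ a)) ^ 2 ∣ g.map φ) :
    g.derivative.eval a ∈ RingHom.ker φ := by
  refine eval_mem_ker_of_X_sub_C_dvd_map ?_
  rw [← derivative_map]
  simpa using pow_sub_one_dvd_derivative_of_pow_dvd hg

lemma eval_derivative_mul_mem_ker_sq (hg : (X - C (φ a)) ^ 2 ∣ g.map φ)
    (hh : (X - C (φ a)) ^ 2 ∣ h.map φ) :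
    (g * h).derivative.eval a ∈ RingHom.ker φ ^ 2 := by
  have eval_mem {k : R[X]} (hk : (X - C (φ a)) ^ 2 ∣ k.map φ) : k.eval a ∈ RingHom.ker φ :=
    eval_mem_ker_of_X_sub_C_dvd_map ((dvd_pow_self _ two_ne_zero).trans hk)
  rw [derivative_mul, eval_add, eval_mul, eval_mul, sq]
  exact add_mem
    (Ideal.mul_mem_mul (eval_derivative_mem_ker_of_X_sub_C_sq_dvd_map hg) (eval_mem hh))
    (Ideal.mul_mem_mul (eval_mem hg) (eval_derivative_mem_ker_of_X_sub_C_sq_dvd_map hh))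

lemma natDegree_le_one_of_mul_map_eq_X_sub_C_pow [IsDomain S] {n : ℕ} (hg : g.Monic)
    (hh : h.Monic) (hmap : (g * h).map φ = (X - C (φ a)) ^ n)
    (hderiv : (g * h).derivative.eval a ∉ RingHom.ker φ ^ 2) :
    g.natDegree ≤ 1 ∨ h.natDegree ≤ 1 := by
  have sq_dvd {k : R[X]} (hk : k.Monic) (hdvd : k ∣ g * h) (hdeg : 1 < k.natDegree) :
      (X - C (φ a)) ^ 2 ∣ k.map φ := by
    rw [eq_X_sub_C_pow_natDegree_of_monic_of_dvd (hk.map φ) (hmap ▸ map_dvd φ hdvd),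
      hk.natDegree_map]
    exact pow_dvd_pow _ hdeg
  contrapose! hderiv
  exact eval_derivative_mul_mem_ker_sq (sq_dvd hg (dvd_mul_right g h) hderiv.1)
    (sq_dvd hh (dvd_mul_left h g) hderiv.2)

lemma natDegree_ne_one_of_monic_of_dvd (hg : g.Monic) (hdvd : g ∣ f) (hroot : ∀ x, ¬ f.IsRoot x) :
    g.natDegree ≠ 1 := by
  intro hdeg
  refine hroot (-g.coeff 0) (IsRoot.dvd ?_ hdvd)
  rw [hg.eq_X_add_C hdeg]
  simp

theorem irreducible_of_monic_of_map_eq_X_sub_C_pow [NoZeroDivisors R] [IsDomain S] {n : ℕ}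
    (hf : f.Monic) (hmap : f.map φ = (X - C (φ a)) ^ n)
    (hderiv : f.derivative.eval a ∉ RingHom.ker φ ^ 2) (hroot : ∀ x, ¬ f.IsRoot x) :
    Irreducible f := by
  refine hf.irreducible_iff_natDegree.2 ⟨?_, ?_⟩
  · rintro rfl
    simp at hderiv
  · rintro g h hg hh rfl
    have hg_nonlinear := natDegree_ne_one_of_monic_of_dvd hg (dvd_mul_right g h) hroot
    have hh_nonlinear := natDegree_ne_one_of_monic_of_dvd hh (dvd_mul_left h g) hroot
    have hdeg := natDegree_le_one_of_mul_map_eq_X_sub_C_pow hg hh hmap hderiv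
    lia

end Criterion

lemma X_sub_C_pow_card_succ {p : ℕ} [Fact p.Prime] (b : ZMod p) :
    (X - C b) ^ (p + 1) = (X ^ p - C b) * (X - C b) := by
  rw [pow_succ, sub_pow_char, ← C_pow, ZMod.pow_card]

/-- The polynomial `P` with its coefficients taken in `ℤ`, so that it can be reduced modulo
primes. -/
noncomputable def integralP : ℤ[X] :=
  X^32 - 4*X^31 - 155*X^28 + 713*X^27 - 2480*X^26 + 9300*X^25 - 5921*X^24 + 24707*X^23 +
    127410*X^22 - 646195*X^21 + 747906*X^20 - 7527575*X^19 + 4369791*X^18 - 28954961*X^17 -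
    40645681*X^16 + 66421685*X^15 - 448568729*X^14 + 751001257*X^13 - 1820871490*X^12 +
    2531110165*X^11 - 4120267319*X^10 + 4554764528*X^9 - 5462615927*X^8 + 4607500922*X^7 -
    4062352344*X^6 + 2380573824*X^5 - 1492309000*X^4 + 521018178*X^3 - 201167463*X^2 +
    20505628*X - 1261963

lemma map_integralP : integralP.map (algebraMap ℤ ℚ) = P := by
  simp [integralP, P]

lemma monic_integralP : integralP.Monic := by
  unfold integralP
  monicity!

instance fact_prime_thirtyOne : Fact (Nat.Prime 31) := ⟨by norm_num⟩

lemma map_integralP_zmod_thirtyOne :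
    integralP.map (Int.castRingHom (ZMod 31)) = (X - C 4) ^ 32 := by
  have reduction :
      integralP.map (Int.castRingHom (ZMod 31)) = X ^ 32 - 4 * X ^ 31 - 4 * X + 16 := by
    simp only [integralP, Polynomial.map_sub, Polynomial.map_add, Polynomial.map_mul,
      Polynomial.map_pow, Polynomial.map_X, Polynomial.map_ofNat]
    reduce_mod_char
  rw [reduction, X_sub_C_pow_card_succ, map_ofNat]
  ring

lemma not_isRoot_integralP (r : ℤ) : ¬ integralP.IsRoot r := by
  have no_root_mod_three (t : ZMod 3) :
      ¬ (integralP.map (Int.castRingHom (ZMod 3))).IsRoot t := by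
    simp only [IsRoot, integralP, Polynomial.map_sub, Polynomial.map_add, Polynomial.map_mul,
      Polynomial.map_pow, Polynomial.map_X, Polynomial.map_ofNat, eval_sub, eval_add, eval_mul,
      eval_pow, eval_X, eval_ofNat]
    revert t
    decide
  exact fun hr => no_root_mod_three r hr.map

lemma eval_derivative_integralP_notMem :
    integralP.derivative.eval 4 ∉ RingHom.ker (Int.castRingHom (ZMod 31)) ^ 2 := by
  rw [ZMod.ker_intCastRingHom, Ideal.span_singleton_pow, Ideal.mem_span_singleton]
  simp [integralP]

theorem irreducible_integralP : Irreducible integralP :=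
  irreducible_of_monic_of_map_eq_X_sub_C_pow monic_integralP
    (by simpa using map_integralP_zmod_thirtyOne) eval_derivative_integralP_notMem
    not_isRoot_integralP

theorem irreducible_P : Irreducible P := by
  rw [← map_integralP]
  exact monic_integralP.irreducible_iff_irreducible_map_fraction_map.1 irreducible_integralP
end

section
/- The polynomial R = x^32 - 4x^31 - 62x^30 + 558x^29 - 248x^28 - 23560x^27 + 143499x^26 + 59489x^25 - 4280108x^24 + 17190864x^23 + 12517459x^22 - 344750256x^21 + 1225662500x^20 - 278789479x^19 - 14790203106x^18 + 64357190741x^17 - 83774789980x^16 - 406418167694x^15 + 2480836111912x^14 - 5273524311353x^13 - 3257558862543x^12 + 54285321863574x^11 - 162450534558477x^10 + 197719989210108x^9 + 250865100757790x^8 - 1714511602191278x^7 + 4206562171750919x^6 - 6661579151098950x^5 + 7460752526582377x^4 - 5959749341609879x^3 + 3269911760551427x^2 - 1113936554991727x + 178725601175511 is irreducible over the rational numbers ℚ. -/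
/-!
Modulo 31, `R` is `(X - 20) ^ 31 * (X - 4)`, and `R 20` is not divisible by `31 ^ 2`. As in
Eisenstein's criterion, the two factors of a monic factorization cannot both vanish at 20 modulo 31;
one that does not is coprime to `X - 20` modulo 31, so it divides `X - 4` there and has degree at
most one. Since `R` takes odd values at all integers it has no linear factor, and that factor is 1.
-/

open Polynomial

noncomputable def R : Polynomial ℚ :=
  X^32 - 4*X^31 - 62*X^30 + 558*X^29 - 248*X^28 - 23560*X^27 + 143499*X^26 + 59489*X^25 - 4280108*X^24 + 17190864*X^23 + 12517459*X^22 - 344750256*X^21 + 1225662500*X^20 - 278789479*X^19 - 14790203106*X^18 + 64357190741*X^17 - 83774789980*X^16 - 406418167694*X^15 + 2480836111912*X^14 - 5273524311353*X^13 - 3257558862543*X^12 + 54285321863574*X^11 - 162450534558477*X^10 + 197719989210108*X^9 + 250865100757790*X^8 - 1714511602191278*X^7 + 4206562171750919*X^6 - 6661579151098950*X^5 + 7460752526582377*X^4 - 5959749341609879*X^3 + 3269911760551427*X^2 - 1113936554991727*X + 178725601175511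

theorem dvd_of_dvd_prime_pow_mul {M : Type*} [CommMonoidWithZero M] [IsCancelMulZero M]
    {p a b : M} {n : ℕ} (hp : Prime p) (hpa : ¬p ∣ a) (hab : a ∣ p ^ n * b) : a ∣ b := by
  obtain ⟨c, hc⟩ := hab
  obtain ⟨d, rfl⟩ : p ^ n ∣ c := hp.pow_dvd_of_dvd_mul_left n hpa (hc ▸ dvd_mul_right _ _)
  refine ⟨d, mul_left_cancel₀ (pow_ne_zero n hp.ne_zero) ?_⟩
  rw [hc, mul_left_comm]

theorem natDegree_eq_zero_of_dvd_of_forall_not_isRoot {A : Type*} [CommRing A] {f g : A[X]}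
    (hg : g.Monic) (hgf : g ∣ f) (hdeg : g.natDegree ≤ 1) (hroot : ∀ x, ¬f.IsRoot x) :
    g.natDegree = 0 := by
  by_contra hne
  have hlin : g = X + C (g.coeff 0) := hg.eq_X_add_C (by lia)
  refine hroot (-g.coeff 0) (IsRoot.dvd ?_ hgf)
  rw [IsRoot.def, hlin]
  simp

section ReductionCriterion

variable {A k : Type*} [CommRing A] [CommRing k] [IsDomain k] {φ : A →+* k} {a : A} {n : ℕ}
  {h : k[X]} {f g : A[X]}

theorem natDegree_le_of_dvd_of_map_eq (hg : g.Monic) (hgf : g ∣ f)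
    (hf : f.map φ = (X - C (φ a)) ^ n * h) (hh : h ≠ 0) (hga : φ (g.eval a) ≠ 0) :
    g.natDegree ≤ h.natDegree := by
  have not_dvd : ¬X - C (φ a) ∣ g.map φ := by
    rwa [dvd_iff_isRoot, IsRoot.def, eval_map_apply]
  have dvd_h : g.map φ ∣ h :=
    dvd_of_dvd_prime_pow_mul (prime_X_sub_C (φ a)) not_dvd (hf ▸ map_dvd φ hgf)
  simpa only [hg.natDegree_map φ] using natDegree_le_of_dvd dvd_h hh

theorem natDegree_le_or_natDegree_le_of_map_mul_eq (hf : f.Monic) (hg : g.Monic)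
    (hfg : (f * g).map φ = (X - C (φ a)) ^ n * h) (ha : (f * g).eval a ∉ RingHom.ker φ ^ 2) :
    f.natDegree ≤ h.natDegree ∨ g.natDegree ≤ h.natDegree := by
  have hh : h ≠ 0 := right_ne_zero_of_mul (hfg ▸ ((hf.mul hg).map φ).ne_zero)
  have eval_ne_zero : φ (f.eval a) ≠ 0 ∨ φ (g.eval a) ≠ 0 := by
    by_contra! hzero
    refine ha ?_
    rw [eval_mul, sq]
    exact Ideal.mul_mem_mul hzero.1 hzero.2
  exact eval_ne_zero.imp
    (natDegree_le_of_dvd_of_map_eq hf (dvd_mul_right f g) hfg hh)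
    (natDegree_le_of_dvd_of_map_eq hg (dvd_mul_left g f) hfg hh)

theorem irreducible_of_map_eq_pow_mul [NoZeroDivisors A] (hf : f.Monic) (hn : n ≠ 0)
    (hmap : f.map φ = (X - C (φ a)) ^ n * h) (hh : h.natDegree ≤ 1)
    (ha : f.eval a ∉ RingHom.ker φ ^ 2) (hroot : ∀ x, ¬f.IsRoot x) : Irreducible f := by
  have hf1 : f ≠ 1 := by
    rintro rfl
    rw [Polynomial.map_one] at hmap
    exact not_isUnit_X_sub_C (φ a)
      (isUnit_of_dvd_one (hmap ▸ (dvd_pow_self _ hn).mul_right h))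
  refine hf.irreducible_iff_natDegree.2 ⟨hf1, ?_⟩
  rintro p q hp hq rfl
  exact (natDegree_le_or_natDegree_le_of_map_mul_eq hp hq hmap ha).imp
    (fun hdeg => natDegree_eq_zero_of_dvd_of_forall_not_isRoot hp (dvd_mul_right p q)
      (hdeg.trans hh) hroot)
    (fun hdeg => natDegree_eq_zero_of_dvd_of_forall_not_isRoot hq (dvd_mul_left q p)
      (hdeg.trans hh) hroot)

end ReductionCriterion

theorem not_isRoot_of_odd_eval {f : ℤ[X]} (h0 : Odd (f.eval 0)) (h1 : Odd (f.eval 1)) (m : ℤ) :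
    ¬f.IsRoot m := by
  intro hm
  have eval_even : ∀ c, Even (m - c) → Even (f.eval c) := fun c hc => by
    have := hc.two_dvd.trans (sub_dvd_eval_sub m c f)
    rwa [hm.eq_zero, zero_sub, dvd_neg, ← even_iff_two_dvd] at this
  rcases Int.even_or_odd m with hmeven | hmodd
  · exact Int.not_even_iff_odd.2 h0 (eval_even 0 (by rwa [sub_zero]))
  · exact Int.not_even_iff_odd.2 h1 (eval_even 1 (hmodd.sub_odd odd_one))

/-- The polynomial `R`, viewed in `ℤ[X]` so that it can be reduced modulo primes. -/
noncomputable def integralR : ℤ[X] :=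
  X ^ 32 - 4 * X ^ 31 - 62 * X ^ 30 + 558 * X ^ 29 - 248 * X ^ 28 - 23560 * X ^ 27
    + 143499 * X ^ 26 + 59489 * X ^ 25 - 4280108 * X ^ 24 + 17190864 * X ^ 23 + 12517459 * X ^ 22
    - 344750256 * X ^ 21 + 1225662500 * X ^ 20 - 278789479 * X ^ 19 - 14790203106 * X ^ 18
    + 64357190741 * X ^ 17 - 83774789980 * X ^ 16 - 406418167694 * X ^ 15 + 2480836111912 * X ^ 14
    - 5273524311353 * X ^ 13 - 3257558862543 * X ^ 12 + 54285321863574 * X ^ 11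
    - 162450534558477 * X ^ 10 + 197719989210108 * X ^ 9 + 250865100757790 * X ^ 8
    - 1714511602191278 * X ^ 7 + 4206562171750919 * X ^ 6 - 6661579151098950 * X ^ 5
    + 7460752526582377 * X ^ 4 - 5959749341609879 * X ^ 3 + 3269911760551427 * X ^ 2
    - 1113936554991727 * X + 178725601175511

theorem map_integralR : integralR.map (Int.castRingHom ℚ) = R := by
  simp [integralR, R]

theorem integralR_monic : integralR.Monic := by
  unfold integralR
  monicity!

theorem map_zmod_integralR :
    integralR.map (Int.castRingHom (ZMod 31)) = (X - C 20) ^ 31 * (X - C 4) := by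
  have frobenius : (X - C 20 : (ZMod 31)[X]) ^ 31 = X ^ 31 - C 20 := by
    have : Fact (Nat.Prime 31) := ⟨by norm_num⟩
    rw [sub_pow_char, ← C_pow, ZMod.pow_card]
  rw [frobenius]
  simp only [integralR, Polynomial.map_add, Polynomial.map_sub, Polynomial.map_mul,
    Polynomial.map_pow, map_X, Polynomial.map_ofNat, map_ofNat]
  ring_nf
  reduce_mod_char

theorem eval_integralR_notMem_ker_sq :
    integralR.eval 20 ∉ RingHom.ker (Int.castRingHom (ZMod 31)) ^ 2 := by
  rw [ZMod.ker_intCastRingHom, Ideal.span_singleton_pow, Ideal.mem_span_singleton]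
  norm_num [integralR]

theorem integralR_not_isRoot (m : ℤ) : ¬integralR.IsRoot m :=
  not_isRoot_of_odd_eval (by norm_num [integralR]) (by norm_num [integralR]) m

theorem irreducible_integralR : Irreducible integralR := by
  have : Fact (Nat.Prime 31) := ⟨by norm_num⟩
  have hmap : integralR.map (Int.castRingHom (ZMod 31)) =
      (X - C (Int.castRingHom (ZMod 31) 20)) ^ 31 * (X - C 4) := by
    rw [map_ofNat, map_zmod_integralR]
  exact irreducible_of_map_eq_pow_mul integralR_monic (by norm_num) hmap
    (natDegree_X_sub_C_le 4) eval_integralR_notMem_ker_sq integralR_not_isRoot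

theorem irreducible_R : Irreducible R := by
  rw [← map_integralR]
  exact integralR_monic.irreducible_iff_irreducible_map_fraction_map.1 irreducible_integralR
end

section
/- The polynomial S = x^32 - 3x^31 - 124x^30 + 651x^29 + 5797x^28 - 44020x^27 - 46593x^26 + 1523309x^25 - 4960682x^24 - 28562129x^23 + 205283395x^22 + 345367838x^21 - 3865963779x^20 - 5281917640x^19 + 35629245810x^18 + 95827452774x^17 + 227525150938x^16 - 1735983387875x^15 - 9952753525850x^14 + 15867354189588x^13 + 146446287180279x^12 - 99789981007214x^11 - 1135328992145553x^10 - 171825071648506x^9 + 7446294546204081x^8 + 294530833190147x^7 - 24397472702475140x^6 - 9976638213111902x^5 + 61714590456038129x^4 + 16902762581347117x^3 - 13833080015551423x^2 - 202960986205176103x + 187532019539254309 is irreducible over the rational numbers ℚ. -/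
/-!
Modulo `31` the polynomial `S` is `(X - 8) ^ 31 * (X - 3)`, while `S(8)` is not divisible by
`31 ^ 2`. As in Eisenstein's criterion, in a factorization `S = g * h` over `ℤ` at most one of
`g(8)` and `h(8)` is divisible by `31`, so the whole power `(X - 8) ^ 31` divides one of the two
factors modulo `31`. The other factor has degree at most `1`, and it is not linear, because
`S(0)` and `S(1)` are odd, so `S` has no integer root.
-/

open Polynomial

noncomputable def S : Polynomial ℚ :=
  X^32 - 3*X^31 - 124*X^30 + 651*X^29 + 5797*X^28 - 44020*X^27 - 46593*X^26 + 1523309*X^25 - 4960682*X^24 - 28562129*X^23 + 205283395*X^22 + 345367838*X^21 - 3865963779*X^20 - 5281917640*X^19 + 35629245810*X^18 + 95827452774*X^17 + 227525150938*X^16 - 1735983387875*X^15 - 9952753525850*X^14 + 15867354189588*X^13 + 146446287180279*X^12 - 99789981007214*X^11 - 1135328992145553*X^10 - 171825071648506*X^9 + 7446294546204081*X^8 + 294530833190147*X^7 - 24397472702475140*X^6 - 9976638213111902*X^5 + 61714590456038129*X^4 + 16902762581347117*X^3 - 13833080015551423*X^2 - 202960986205176103*X + 187532019539254309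

section EisensteinAtAPower

variable {R K : Type*} [CommRing R] [CommRing K] {φ : R →+* K}

theorem not_X_sub_C_dvd_map_of_eval_notMem_ker {f : R[X]} {a : R} (ha : f.eval a ∉ RingHom.ker φ) :
    ¬ X - C (φ a) ∣ f.map φ := by
  rwa [dvd_iff_isRoot, IsRoot.def, eval_map_apply]

theorem le_natDegree_of_X_sub_C_pow_dvd_map [Nontrivial K] {f : R[X]} (hf : f.Monic) {b : K} {n : ℕ}
    (hdvd : (X - C b) ^ n ∣ f.map φ) : n ≤ f.natDegree := by
  by_contra! hlt
  refine ((monic_X_sub_C b).pow n).not_dvd_of_natDegree_lt (hf.map φ).ne_zero ?_ hdvd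
  rwa [hf.natDegree_map, (monic_X_sub_C b).natDegree_pow, natDegree_X_sub_C, mul_one]

theorem natDegree_ne_one_of_dvd_of_forall_not_isRoot {f q : R[X]} (hq : q.Monic) (hqf : q ∣ f)
    (hroot : ∀ r, ¬ f.IsRoot r) : q.natDegree ≠ 1 := by
  intro hq1
  refine hroot (-q.coeff 0) (IsRoot.dvd ?_ hqf)
  rw [hq.eq_X_add_C hq1]
  simp

variable [IsDomain K]

theorem X_sub_C_pow_dvd_map_or_of_dvd_map_mul {g h : R[X]} {a : R} {n : ℕ}
    (hdvd : (X - C (φ a)) ^ n ∣ (g * h).map φ) (ha : (g * h).eval a ∉ RingHom.ker φ ^ 2) :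
    (X - C (φ a)) ^ n ∣ g.map φ ∨ (X - C (φ a)) ^ n ∣ h.map φ := by
  have notMem_ker : g.eval a ∉ RingHom.ker φ ∨ h.eval a ∉ RingHom.ker φ := by
    by_contra! hmem
    rw [eval_mul, sq] at ha
    exact ha (Ideal.mul_mem_mul hmem.1 hmem.2)
  rw [Polynomial.map_mul] at hdvd
  have hprime : Prime (X - C (φ a)) := prime_X_sub_C _
  rcases notMem_ker with hg | hh
  · exact .inr (hprime.pow_dvd_of_dvd_mul_left n (not_X_sub_C_dvd_map_of_eval_notMem_ker hg) hdvd)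
  · exact .inl (hprime.pow_dvd_of_dvd_mul_right n (not_X_sub_C_dvd_map_of_eval_notMem_ker hh) hdvd)

theorem irreducible_of_X_sub_C_pow_dvd_map [NoZeroDivisors R] {f : R[X]} (hf : f.Monic) {a : R}
    {n : ℕ} (hdeg : f.natDegree = n + 1) (hdvd : (X - C (φ a)) ^ n ∣ f.map φ)
    (ha : f.eval a ∉ RingHom.ker φ ^ 2) (hroot : ∀ r, ¬ f.IsRoot r) : Irreducible f := by
  refine hf.irreducible_iff_natDegree.mpr ⟨?_, ?_⟩
  · rintro rfl
    simp at hdeg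
  rintro g h hg hh rfl
  have hdeg_add : g.natDegree + h.natDegree = n + 1 := by rw [← hg.natDegree_mul hh, hdeg]
  have hg1 := natDegree_ne_one_of_dvd_of_forall_not_isRoot hg (dvd_mul_right g h) hroot
  have hh1 := natDegree_ne_one_of_dvd_of_forall_not_isRoot hh (dvd_mul_left h g) hroot
  rcases X_sub_C_pow_dvd_map_or_of_dvd_map_mul hdvd ha with hdvd_g | hdvd_h
  · have := le_natDegree_of_X_sub_C_pow_dvd_map hg hdvd_g
    lia
  · have := le_natDegree_of_X_sub_C_pow_dvd_map hh hdvd_h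
    lia

end EisensteinAtAPower

/-- The polynomial `S` over `ℤ`, where it can be reduced modulo primes. -/
noncomputable def SInt : ℤ[X] :=
  X^32 - 3*X^31 - 124*X^30 + 651*X^29 + 5797*X^28 - 44020*X^27 - 46593*X^26 + 1523309*X^25 -
    4960682*X^24 - 28562129*X^23 + 205283395*X^22 + 345367838*X^21 - 3865963779*X^20 -
    5281917640*X^19 + 35629245810*X^18 + 95827452774*X^17 + 227525150938*X^16 -
    1735983387875*X^15 - 9952753525850*X^14 + 15867354189588*X^13 + 146446287180279*X^12 -
    99789981007214*X^11 - 1135328992145553*X^10 - 171825071648506*X^9 + 7446294546204081*X^8 +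
    294530833190147*X^7 - 24397472702475140*X^6 - 9976638213111902*X^5 + 61714590456038129*X^4 +
    16902762581347117*X^3 - 13833080015551423*X^2 - 202960986205176103*X + 187532019539254309

theorem SInt_map_rat : SInt.map (algebraMap ℤ ℚ) = S := by
  simp [SInt, S]

theorem SInt_monic : SInt.Monic := by
  unfold SInt
  monicity!

theorem SInt_natDegree : SInt.natDegree = 32 := by
  unfold SInt
  compute_degree!

theorem SInt_map_zmod31 : SInt.map (Int.castRingHom (ZMod 31)) = (X - 8) ^ 31 * (X - 3) := by
  have : Fact (Nat.Prime 31) := ⟨by norm_num⟩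
  have frobenius : (X - 8 : (ZMod 31)[X]) ^ 31 = X ^ 31 - 8 := by
    rw [sub_pow_char]
    reduce_mod_char
  have reduction : SInt.map (Int.castRingHom (ZMod 31)) = X ^ 32 - 3 * X ^ 31 - 8 * X + 24 := by
    simp only [SInt, Polynomial.map_add, Polynomial.map_sub, Polynomial.map_mul,
      Polynomial.map_pow, Polynomial.map_ofNat, map_X]
    reduce_mod_char
  rw [frobenius, reduction]
  ring

theorem not_sq_dvd_eval_eight_SInt : ¬ 31 ^ 2 ∣ SInt.eval 8 := by
  norm_num [SInt]

theorem not_isRoot_SInt_map_zmod2 (t : ZMod 2) :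
    ¬ (SInt.map (Int.castRingHom (ZMod 2))).IsRoot t := by
  simp only [SInt, IsRoot.def, Polynomial.map_add, Polynomial.map_sub, Polynomial.map_mul,
    Polynomial.map_pow, Polynomial.map_ofNat, map_X, eval_add, eval_sub, eval_mul, eval_pow,
    eval_ofNat, eval_X]
  reduce_mod_char
  revert t
  decide

theorem not_isRoot_SInt (r : ℤ) : ¬ SInt.IsRoot r :=
  fun hr => not_isRoot_SInt_map_zmod2 r hr.map

theorem irreducible_S : Irreducible S := by
  have : Fact (Nat.Prime 31) := ⟨by norm_num⟩
  rw [← SInt_map_rat, ← SInt_monic.irreducible_iff_irreducible_map_fraction_map]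
  refine irreducible_of_X_sub_C_pow_dvd_map (φ := Int.castRingHom (ZMod 31)) (a := 8) SInt_monic
    SInt_natDegree ?_ ?_ not_isRoot_SInt
  · rw [SInt_map_zmod31]
    exact Dvd.intro (X - 3) (by simp only [map_ofNat])
  · rw [ZMod.ker_intCastRingHom, Ideal.span_singleton_pow, Ideal.mem_span_singleton]
    exact not_sq_dvd_eval_eight_SInt
end

section
/- Let P be a polynomial with real coefficients such that P(0) ≠ 0 and P splits over ℝ (i.e., all of its complex roots are real). Then (coeff₁ P)² - 2 · (coeff₀ P) · (coeff₂ P) ≥ 0, where coeffᵢ P denotes the coefficient of x^i in P. Equivalently, if (coeff₁ P)² - 2 · (coeff₀ P) · (coeff₂ P) < 0 and P(0) ≠ 0, then P has a non-real complex root. -/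
open Polynomial

/-!
Formally `P'² - P P'' = -P² (log P)''`. Since `-(log P)''` is additive in `P` and equals
`1 / (x - r)²` for a linear factor `x - r`, the expression `P'² - P P''` is a sum of squares
whenever `P` splits. At `x = 0` it is `a₁² - 2 a₀ a₂`, which for `a₀ ≠ 0` is `a₀²` times the sum of
the squared reciprocals of the roots.
-/

theorem isSumSq_map {R S F : Type*} [NonUnitalNonAssocSemiring R] [NonUnitalNonAssocSemiring S]
    [FunLike F R S] [NonUnitalRingHomClass F R S] (φ : F) {s : R} (hs : IsSumSq s) :
    IsSumSq (φ s) := by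
  induction hs with
  | zero => simp
  | sq_add a _ ih => simpa only [map_add, map_mul] using ih.sq_add (φ a)

section LaguerreForm

variable {R : Type*} [CommRing R]

/-- The expression `P'² - P P''` of Laguerre's inequality, which asserts that it is nonnegative at
every real point when `P` is a real polynomial with only real roots. It is kept as a polynomial so
that it makes sense, and can be a sum of squares, over every commutative ring. -/
noncomputable def laguerreForm (P : R[X]) : R[X] :=
  derivative P ^ 2 - P * derivative (derivative P)

theorem laguerreForm_C (a : R) : laguerreForm (C a) = 0 := by
  simp [laguerreForm]

theorem laguerreForm_X_add_C (a : R) : laguerreForm (X + C a) = 1 := by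
  simp [laguerreForm]

theorem laguerreForm_mul (P Q : R[X]) :
    laguerreForm (P * Q) = P ^ 2 * laguerreForm Q + Q ^ 2 * laguerreForm P := by
  simp only [laguerreForm, derivative_mul, derivative_add]
  ring

theorem isSumSq_laguerreForm_of_splits {P : R[X]} (hP : P.Splits) :
    IsSumSq (laguerreForm P) := by
  induction hP using Submonoid.closure_induction with
  | mem P hP =>
    obtain ⟨a, rfl⟩ | ⟨a, rfl⟩ := hP
    · exact laguerreForm_C a ▸ .zero
    · exact laguerreForm_X_add_C a ▸ .one
  | one =>
    rw [← C_1, laguerreForm_C]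
    exact .zero
  | mul P Q _ _ hP hQ =>
    rw [laguerreForm_mul]
    exact ((IsSquare.sq P).isSumSq.mul hQ).add ((IsSquare.sq Q).isSumSq.mul hP)

theorem eval_zero_laguerreForm (P : R[X]) :
    (laguerreForm P).eval 0 = P.coeff 1 ^ 2 - 2 * P.coeff 0 * P.coeff 2 := by
  simp only [laguerreForm, eval_sub, eval_pow, eval_mul, ← coeff_zero_eq_eval_zero,
    coeff_derivative, Nat.reduceAdd, Nat.cast_zero, Nat.cast_one, zero_add, mul_one]
  ring

theorem coeff_ineq_of_splits_general {P : R[X]} (hP : P.Splits) :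
    IsSumSq (P.coeff 1 ^ 2 - 2 * P.coeff 0 * P.coeff 2) :=
  eval_zero_laguerreForm P ▸ isSumSq_map (evalRingHom 0) (isSumSq_laguerreForm_of_splits hP)

end LaguerreForm

theorem coeff_ineq_of_splits (P : Polynomial ℝ) (h0 : P.eval 0 ≠ 0)
    (hsplit : (P.map (RingHom.id ℝ)).Splits) :
    (P.coeff 1) ^ 2 - 2 * P.coeff 0 * P.coeff 2 ≥ 0 :=
  (coeff_ineq_of_splits_general (P.map_id ▸ hsplit)).nonneg
end

section
/- Let P = x^32 - 4x^31 - 155x^28 + 713x^27 - 2480x^26 + 9300x^25 - 5921x^24 + 24707x^23 + 127410x^22 - 646195x^21 + 747906x^20 - 7527575x^19 + 4369791x^18 - 28954961x^17 - 40645681x^16 + 66421685x^15 - 448568729x^14 + 751001257x^13 - 1820871490x^12 + 2531110165x^11 - 4120267319x^10 + 4554764528x^9 - 5462615927x^8 + 4607500922x^7 - 4062352344x^6 + 2380573824x^5 - 1492309000x^4 + 521018178x^3 - 201167463x^2 + 20505628x - 1261963 ∈ ℚ[x], which is irreducible, and let K = ℚ[x]/(P) be the number field it defines. Then K is not totally real;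 equivalently, P has at least one non-real complex root. -/
open Polynomial

/-!
The polynomial `p' ^ 2 - p * p''` takes only nonnegative values on `ℝ` when all the roots of `p`
are real (Laguerre's inequality). At `0` this says `2 * a₀ * a₂ ≤ a₁ ^ 2` for the coefficients
`aᵢ` of `p`, which `P` violates. So `P` has a non-real root, and sending the class of `X` to that
root defines a homomorphism `ℚ[x]/(P) → ℂ` with non-real image.
-/

section Laguerre

/-- The Laguerre expression `p' ^ 2 - p * p''` of a polynomial `p`, whose sign at real points
detects non-real roots. It equals `-p ^ 2 * (p' / p)'`, but is defined without division. -/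
noncomputable def laguerre {R : Type*} [CommRing R] (p : R[X]) : R[X] :=
  derivative p ^ 2 - p * derivative (derivative p)

section CommRing

variable {R S : Type*} [CommRing R] [CommRing S]

theorem laguerre_C (a : R) : laguerre (C a) = 0 := by
  simp [laguerre]

theorem laguerre_X_add_C (a : R) : laguerre (X + C a) = 1 := by
  simp [laguerre]

theorem laguerre_mul (p q : R[X]) :
    laguerre (p * q) = q ^ 2 * laguerre p + p ^ 2 * laguerre q := by
  simp only [laguerre, derivative_mul, derivative_add]
  ring

theorem laguerre_map (f : R →+* S) (p : R[X]) : laguerre (p.map f) = (laguerre p).map f := by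
  simp [laguerre, derivative_map]

theorem eval_zero_laguerre (p : R[X]) :
    (laguerre p).eval 0 = p.coeff 1 ^ 2 - 2 * p.coeff 0 * p.coeff 2 := by
  simp only [laguerre, eval_sub, eval_pow, eval_mul, ← coeff_zero_eq_eval_zero, coeff_derivative]
  push_cast
  ring

end CommRing

theorem eval_laguerre_nonneg_of_splits {R : Type*} [CommRing R] [LinearOrder R]
    [IsStrictOrderedRing R] {p : R[X]} (hp : p.Splits) (x : R) : 0 ≤ (laguerre p).eval x := by
  induction hp using Submonoid.closure_induction with
  | mem q hq =>
    obtain ⟨a, rfl⟩ | ⟨a, rfl⟩ := hq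
    · simp [laguerre_C]
    · simp [laguerre_X_add_C]
  | one => simp [laguerre]
  | mul q r _ _ hq hr =>
    simp only [laguerre_mul, eval_add, eval_mul, eval_pow]
    positivity

end Laguerre

theorem splits_of_forall_aeval_eq_zero_im_eq_zero {p : ℝ[X]}
    (h : ∀ z : ℂ, aeval z p = 0 → z.im = 0) : p.Splits := by
  refine Splits.of_splits_map (algebraMap ℝ ℂ) (IsAlgClosed.splits _) fun z hz ↦ ?_
  have hz_root : aeval z p = 0 := by simpa using (mem_roots'.1 hz).2
  exact ⟨z.re, Complex.ext rfl (h z hz_root).symm⟩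

theorem exists_aeval_eq_zero_im_ne_zero_of_aeval_laguerre_neg {R : Type*} [CommRing R]
    [Algebra R ℝ] {p : R[X]} {x : ℝ} (h : aeval x (laguerre p) < 0) :
    ∃ z : ℂ, aeval z p = 0 ∧ z.im ≠ 0 := by
  by_contra! hreal
  have hsplits : (p.map (algebraMap R ℝ)).Splits :=
    splits_of_forall_aeval_eq_zero_im_eq_zero fun z hz ↦
      hreal z (by rwa [aeval_map_algebraMap] at hz)
  have hnonneg := eval_laguerre_nonneg_of_splits hsplits x
  rw [laguerre_map, eval_map_algebraMap] at hnonneg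
  exact h.not_ge hnonneg

theorem not_forall_adjoinRoot_range_subset {R A : Type*} [CommRing R] [CommRing A]
    [Algebra R A] {p : R[X]} {z : A} {s : Set A} (hz : aeval z p = 0) (hzs : z ∉ s) :
    ¬ ∀ φ : AdjoinRoot p →+* A, Set.range φ ⊆ s := fun h ↦
  hzs (h (AdjoinRoot.lift (algebraMap R A) z hz) ⟨AdjoinRoot.root p, AdjoinRoot.lift_root hz⟩)

theorem coeff_zero_P : P.coeff 0 = -1261963 := by
  simp [P]

theorem coeff_one_P : P.coeff 1 = 20505628 := by
  simp [P]

theorem coeff_two_P : P.coeff 2 = -201167463 := by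
  simp [P, coeff_X]

theorem eval_zero_laguerre_P_neg : (laguerre P).eval 0 < 0 := by
  rw [eval_zero_laguerre, coeff_zero_P, coeff_one_P, coeff_two_P]
  norm_num

theorem not_totallyReal_P_general :
    (¬ ∀ φ : AdjoinRoot P →+* ℂ, Set.range φ ⊆ Set.range ((↑) : ℝ → ℂ)) ∧
      ∃ z : ℂ, Polynomial.aeval z P = 0 ∧ z.im ≠ 0 := by
  have hneg : aeval (0 : ℝ) (laguerre P) < 0 := by
    rw [← map_zero (algebraMap ℚ ℝ), aeval_algebraMap_apply_eq_algebraMap_eval]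
    simpa using eval_zero_laguerre_P_neg
  obtain ⟨z, hz, him⟩ := exists_aeval_eq_zero_im_ne_zero_of_aeval_laguerre_neg hneg
  have hz_not_real : z ∉ Set.range ((↑) : ℝ → ℂ) := by
    rintro ⟨x, rfl⟩
    exact him (Complex.ofReal_im x)
  exact ⟨not_forall_adjoinRoot_range_subset hz hz_not_real, z, hz, him⟩

theorem not_totallyReal_P (hP : Irreducible P) :
    haveI : Fact (Irreducible P) := ⟨hP⟩
    (¬ ∀ φ : AdjoinRoot P →+* ℂ, Set.range φ ⊆ Set.range ((↑) : ℝ → ℂ)) ∧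
      ∃ z : ℂ, Polynomial.aeval z P = 0 ∧ z.im ≠ 0 :=
  not_totallyReal_P_general
end
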